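/- Let N = 2^v r, where v > 0 and r is an odd prime such that 2 is a primitive root modulo r. Let 1 ≤ k ≤ N and let S be an N-periodic binary sequence such that L(S) = N - c > L_{N,k}(S) ≥ N - min(2^v, r - 2) for some nonnegative integer c. Set Z = 2^{⌈log_2(N - L_{N,k}(S))⌉}. Then there exist an integer m ≤ k and an N-periodic binary sequence E of Hamming weight m with support contained in {0, 1, ..., Z - 1} such that L(S + E) = L_{N,k}(S); in particular L_{N,k}(S) = L_{N,k;Z}(S). -/

import Mathlib

/-- Generating polynomial `S^N(x) = s_0 + s_1 x + ... + s_{N-1} x^{N-1}` of one period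
of an `N`-periodic binary sequence. -/
noncomputable def genPoly {N : ℕ} (S : Fin N → ZMod 2) : Polynomial (ZMod 2) :=
  ∑ i : Fin N, Polynomial.C (S i) * Polynomial.X ^ (i : ℕ)

/-- Linear complexity `L(S) = N - deg (gcd (1 - x^N, S^N(x)))`. -/
noncomputable def linComp {N : ℕ} (S : Fin N → ZMod 2) : ℕ :=
  N - (EuclideanDomain.gcd (1 - Polynomial.X ^ N) (genPoly S)).natDegree

/-- Hamming weight of one period of an `N`-periodic binary sequence. -/
def wt {N : ℕ} (T : Fin N → ZMod 2) : ℕ :=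
  (Finset.univ.filter (fun i => T i ≠ 0)).card

/-- `k`-error linear complexity `L_{N,k}(S)`. -/
noncomputable def errLC {N : ℕ} (S : Fin N → ZMod 2) (k : ℕ) : ℕ :=
  sInf {c | ∃ T : Fin N → ZMod 2, wt T ≤ k ∧ linComp (S + T) = c}

/-- `k`-error linear complexity with a zone of length `Z`: `L_{N,k;Z}(S)`. -/
noncomputable def errLCZone {N : ℕ} (S : Fin N → ZMod 2) (k Z : ℕ) : ℕ :=
  sInf {c | ∃ T : Fin N → ZMod 2, wt T ≤ k ∧ (∀ i : Fin N, Z ≤ (i : ℕ) → T i = 0) ∧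
    linComp (S + T) = c}

/-- `E_1(j)`: the sequence whose only nonzero term in one period is a `1` at position `j`. -/
def E1 {N : ℕ} (j : Fin N) : Fin N → ZMod 2 :=
  fun i => if i = j then 1 else 0

/-!
Let `T` attain `L_{N,k}(S)` and let `g` be the gcd of `1 - X ^ N` and the generating polynomial of
`S + T`, so that `deg g = N - L_{N,k}(S)`. Every irreducible factor of `X ^ (2 ^ v * r) - 1` other
than `X - 1` has degree equal to the order of `2` modulo some divisor `d ≠ 1` of `r`, so a divisor
of degree less than the order of `2` modulo every prime factor of `r` is a power of `X - 1`.
Therefore `g` divides `(X - 1) ^ Z = X ^ Z - 1` as soon as `Z ≥ deg g` is a power of two. Reducing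
the positions of the errors in `T` modulo `Z` increases neither the weight nor the complexity: it
changes the generating polynomial by a multiple of `X ^ Z - 1`, hence by a multiple of `g`.
-/

section LowDegreeDivisors

open Polynomial

lemma coprime_of_forall_prime_orderOf_pos {n r : ℕ}
    (h : ∀ q : ℕ, q.Prime → q ∣ r → 0 < orderOf (n : ZMod q)) : n.Coprime r := by
  refine Nat.coprime_of_dvd fun q hq hqn hqr => (h q hq hqr).ne' ?_
  have : Fact q.Prime := ⟨hq⟩
  rw [(ZMod.natCast_eq_zero_iff n q).2 hqn, orderOf_zero]

lemma X_pow_sub_one_ne_zero {R : Type*} [Ring R] [Nontrivial R] {n : ℕ} (hn : n ≠ 0) :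
    (X ^ n - 1 : R[X]) ≠ 0 := by
  simpa only [C_1] using (monic_X_pow_sub_C (1 : R) hn).ne_zero

lemma pow_char_pow_mul_sub_one {R : Type*} [CommRing R] {p : ℕ} [Fact p.Prime] [CharP R p]
    (x : R) (v r : ℕ) :
    x ^ (p ^ v * r) - 1 = (x - 1) ^ p ^ v * (∑ i ∈ Finset.range r, x ^ i) ^ p ^ v := by
  rw [← mul_pow, mul_geom_sum, sub_pow_char_pow, one_pow, ← pow_mul, mul_comm]

variable {K : Type*} [Field K] {g : K[X]}

lemma dvd_X_sub_C_pow_natDegree_of_dvd_pow {a : K} {n : ℕ} (hg : g ∣ (X - C a) ^ n) :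
    g ∣ (X - C a) ^ g.natDegree := by
  obtain ⟨i, -, hi⟩ := (dvd_prime_pow (prime_X_sub_C a) n).1 hg
  have hdeg : g.natDegree = i := by
    rw [natDegree_eq_of_degree_eq (degree_eq_degree_of_associated hi), natDegree_pow,
      natDegree_X_sub_C, mul_one]
  exact hdeg ▸ hi.dvd

variable [Finite K]

lemma orderOf_natCard_le_natDegree_of_irreducible_of_dvd_cyclotomic {f : K[X]} {d q : ℕ}
    (hf : Irreducible f) (hfd : f ∣ cyclotomic d K) (hd : (Nat.card K).Coprime d) (hqd : q ∣ d) :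
    orderOf (Nat.card K : ZMod q) ≤ f.natDegree := by
  have := Fintype.ofFinite K
  obtain ⟨p, -, e, hp, hcard⟩ := FiniteField.card' K
  have : Fact p.Prime := ⟨hp⟩
  rw [Nat.card_eq_fintype_card] at hd ⊢
  have hpd : p.Coprime d := hd.coprime_dvd_left (hcard ▸ dvd_pow_self p e.ne_zero)
  have hdeg : f.natDegree = orderOf (Fintype.card K : ZMod d) := by
    rw [natDegree_of_dvd_cyclotomic_of_irreducible hcard hpd hfd hf, ← orderOf_units,
      ZMod.coe_unitOfCoprime, hcard]
  have hdvd : orderOf (Fintype.card K : ZMod q) ∣ f.natDegree := by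
    simpa [hdeg] using
      orderOf_map_dvd (ZMod.castHom hqd (ZMod q) : ZMod d →* ZMod q) (Fintype.card K : ZMod d)
  exact Nat.le_of_dvd hf.natDegree_pos hdvd

lemma isCoprime_cyclotomic_of_natDegree_lt_orderOf {d q : ℕ} (hg : g ≠ 0)
    (hd : (Nat.card K).Coprime d) (hqd : q ∣ d)
    (hdeg : g.natDegree < orderOf (Nat.card K : ZMod q)) : IsCoprime g (cyclotomic d K) :=
  isCoprime_of_irreducible_dvd (fun h => hg h.1) fun _ hf hfg hfd =>
    hdeg.not_ge <| (orderOf_natCard_le_natDegree_of_irreducible_of_dvd_cyclotomic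
      hf hfd hd hqd).trans (natDegree_le_of_dvd hfg hg)

variable {p v r : ℕ} [Fact p.Prime] [CharP K p]

lemma dvd_X_sub_one_pow_of_natDegree_lt_orderOf
    (hdeg : ∀ q : ℕ, q.Prime → q ∣ r → g.natDegree < orderOf (Nat.card K : ZMod q))
    (hg : g ∣ X ^ (p ^ v * r) - 1) : g ∣ (X - 1) ^ p ^ v := by
  have hcard : (Nat.card K).Coprime r :=
    coprime_of_forall_prime_orderOf_pos fun q hq hqr => (hdeg q hq hqr).pos
  have hr : r ≠ 0 := by
    rintro rfl
    exact Finite.one_lt_card.ne' ((Nat.coprime_zero_right _).1 hcard)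
  have hg0 : g ≠ 0 := ne_zero_of_dvd_ne_zero
    (X_pow_sub_one_ne_zero (mul_ne_zero (pow_ne_zero v (NeZero.ne p)) hr)) hg
  have hcop : IsCoprime g (∑ i ∈ Finset.range r, X ^ i) := by
    rw [← prod_cyclotomic_eq_geom_sum hr.bot_lt]
    refine IsCoprime.prod_right fun d hd => ?_
    obtain ⟨hd1, hdr, -⟩ : d ≠ 1 ∧ d ∣ r ∧ r ≠ 0 := by simpa using hd
    exact isCoprime_cyclotomic_of_natDegree_lt_orderOf hg0 (hcard.coprime_dvd_right hdr)
      d.minFac_dvd (hdeg _ (Nat.minFac_prime hd1) (d.minFac_dvd.trans hdr))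
  rw [pow_char_pow_mul_sub_one] at hg
  exact hcop.pow_right.dvd_of_dvd_mul_right hg

lemma dvd_X_pow_char_pow_sub_one_of_natDegree_lt_orderOf {e : ℕ}
    (hdeg : ∀ q : ℕ, q.Prime → q ∣ r → g.natDegree < orderOf (Nat.card K : ZMod q))
    (hg : g ∣ X ^ (p ^ v * r) - 1) (he : g.natDegree ≤ p ^ e) : g ∣ X ^ p ^ e - 1 := by
  have hpow : g ∣ (X - C 1) ^ p ^ v := by
    simpa using dvd_X_sub_one_pow_of_natDegree_lt_orderOf hdeg hg
  calc g ∣ (X - C 1) ^ g.natDegree := dvd_X_sub_C_pow_natDegree_of_dvd_pow hpow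
    _ ∣ (X - C 1) ^ p ^ e := pow_dvd_pow _ he
    _ = X ^ p ^ e - 1 := by rw [C_1, sub_pow_char_pow, one_pow]

end LowDegreeDivisors

section Folding

variable {N : ℕ}

/-- The sequence obtained from `T` by moving each term to its position modulo `Z` and adding up
the terms that meet there. It is kept of length `N`, with zeros from position `Z` on; for `Z = 0`
it is `T` itself, since `j % 0 = j`. -/
def foldMod {M : Type*} [AddCommMonoid M] (Z : ℕ) (T : Fin N → M) : Fin N → M :=
  fun i => ∑ j with j.val % Z = i.val, T j

lemma exists_ne_zero_of_foldMod_ne_zero {M : Type*} [AddCommMonoid M] {Z : ℕ} {T : Fin N → M}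
    {i : Fin N} (hi : foldMod Z T i ≠ 0) : ∃ j : Fin N, T j ≠ 0 ∧ (j : ℕ) % Z = i := by
  obtain ⟨j, hj, hTj⟩ := Finset.exists_ne_zero_of_sum_ne_zero hi
  exact ⟨j, hTj, (Finset.mem_filter.1 hj).2⟩

lemma lt_of_foldMod_ne_zero {M : Type*} [AddCommMonoid M] {Z : ℕ} (hZ : 0 < Z) {T : Fin N → M}
    {i : Fin N} (hi : foldMod Z T i ≠ 0) : (i : ℕ) < Z := by
  obtain ⟨j, -, hj⟩ := exists_ne_zero_of_foldMod_ne_zero hi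
  exact hj ▸ Nat.mod_lt _ hZ

lemma wt_foldMod_le (Z : ℕ) (T : Fin N → ZMod 2) : wt (foldMod Z T) ≤ wt T := by
  refine Finset.card_le_card_of_surjOn
    (fun j : Fin N => ⟨(j : ℕ) % Z, (Nat.mod_le _ _).trans_lt j.2⟩) fun i hi => ?_
  obtain ⟨j, hTj, hji⟩ := exists_ne_zero_of_foldMod_ne_zero (by simpa using hi)
  exact ⟨j, by simpa using hTj, Fin.ext hji⟩

open Polynomial

lemma genPoly_add (S T : Fin N → ZMod 2) : genPoly (S + T) = genPoly S + genPoly T := by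
  simp [genPoly, add_mul, Finset.sum_add_distrib]

lemma genPoly_foldMod (Z : ℕ) (T : Fin N → ZMod 2) :
    genPoly (foldMod Z T) = ∑ j : Fin N, C (T j) * X ^ ((j : ℕ) % Z) := by
  simp only [genPoly, foldMod, Finset.sum_filter, map_sum, Finset.sum_mul]
  rw [Finset.sum_comm]
  refine Finset.sum_congr rfl fun j _ => ?_
  rw [Finset.sum_eq_single (⟨(j : ℕ) % Z, (Nat.mod_le _ _).trans_lt j.2⟩ : Fin N)]
  · rw [if_pos rfl]
  · intro i _ hij
    rw [if_neg fun h => hij (Fin.ext h.symm), C_0, zero_mul]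
  · simp

lemma pow_sub_one_dvd_pow_sub_pow_mod {R : Type*} [CommRing R] (x : R) (m n : ℕ) :
    x ^ m - 1 ∣ x ^ n - x ^ (n % m) := by
  have hfactor : x ^ n - x ^ (n % m) = x ^ (n % m) * ((x ^ m) ^ (n / m) - 1) := by
    rw [mul_sub_one, ← pow_mul, ← pow_add, Nat.mod_add_div]
  exact hfactor ▸ (sub_one_dvd_pow_sub_one _ _).mul_left _

lemma X_pow_sub_one_dvd_genPoly_sub_genPoly_foldMod (Z : ℕ) (T : Fin N → ZMod 2) :
    (X ^ Z - 1 : (ZMod 2)[X]) ∣ genPoly T - genPoly (foldMod Z T) := by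
  rw [genPoly_foldMod, genPoly, ← Finset.sum_sub_distrib]
  refine Finset.dvd_sum fun j _ => ?_
  rw [← mul_sub]
  exact (pow_sub_one_dvd_pow_sub_pow_mod X Z j).mul_left _

end Folding

section LinearComplexity

open Polynomial

variable {N : ℕ}

/-- The greatest common divisor of `1 - X ^ N` and the generating polynomial of `S`: its degree is
the amount by which the linear complexity of `S` falls short of `N`. -/
noncomputable def periodGcd (S : Fin N → ZMod 2) : (ZMod 2)[X] :=
  EuclideanDomain.gcd (1 - X ^ N) (genPoly S)

lemma periodGcd_dvd_X_pow_sub_one (S : Fin N → ZMod 2) : periodGcd S ∣ X ^ N - 1 :=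
  dvd_sub_comm.1 (EuclideanDomain.gcd_dvd_left _ _)

lemma natDegree_periodGcd_le (S : Fin N → ZMod 2) : (periodGcd S).natDegree ≤ N := by
  rcases eq_or_ne N 0 with rfl | hN
  · simp [periodGcd, genPoly]
  · calc (periodGcd S).natDegree ≤ (X ^ N - C 1 : (ZMod 2)[X]).natDegree :=
          natDegree_le_of_dvd (periodGcd_dvd_X_pow_sub_one S) (X_pow_sub_one_ne_zero hN)
      _ = N := natDegree_X_pow_sub_C

lemma natDegree_periodGcd (S : Fin N → ZMod 2) : (periodGcd S).natDegree = N - linComp S :=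
  (Nat.sub_sub_self (natDegree_periodGcd_le S)).symm

lemma linComp_le_of_periodGcd_dvd {S S' : Fin N → ZMod 2} (h : periodGcd S ∣ periodGcd S') :
    linComp S' ≤ linComp S := by
  rcases eq_or_ne N 0 with rfl | hN
  · simp [linComp]
  · exact Nat.sub_le_sub_left (natDegree_le_of_dvd h
      (ne_zero_of_dvd_ne_zero (X_pow_sub_one_ne_zero hN) (periodGcd_dvd_X_pow_sub_one S'))) N

lemma linComp_add_foldMod_le {S T : Fin N → ZMod 2} {Z : ℕ}
    (h : periodGcd (S + T) ∣ X ^ Z - 1) : linComp (S + foldMod Z T) ≤ linComp (S + T) := by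
  have hfold : genPoly (S + foldMod Z T) =
      genPoly (S + T) - (genPoly T - genPoly (foldMod Z T)) := by
    rw [genPoly_add, genPoly_add]
    ring
  have hdvd : periodGcd (S + T) ∣ genPoly (S + foldMod Z T) := hfold ▸
    dvd_sub (EuclideanDomain.gcd_dvd_right _ _)
      (h.trans (X_pow_sub_one_dvd_genPoly_sub_genPoly_foldMod Z T))
  exact linComp_le_of_periodGcd_dvd
    (EuclideanDomain.dvd_gcd (EuclideanDomain.gcd_dvd_left _ _) hdvd)

end LinearComplexity

section ErrorLinearComplexity

variable {N : ℕ}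

lemma wt_zero : wt (0 : Fin N → ZMod 2) = 0 := by
  simp [wt]

lemma errLC_le_linComp_add (S : Fin N → ZMod 2) {T : Fin N → ZMod 2} {k : ℕ} (hT : wt T ≤ k) :
    errLC S k ≤ linComp (S + T) :=
  Nat.sInf_le ⟨T, hT, rfl⟩

lemma exists_linComp_add_eq_errLC (S : Fin N → ZMod 2) (k : ℕ) :
    ∃ T : Fin N → ZMod 2, wt T ≤ k ∧ linComp (S + T) = errLC S k :=
  Nat.sInf_mem (s := {c | ∃ T : Fin N → ZMod 2, wt T ≤ k ∧ linComp (S + T) = c})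
    ⟨_, 0, wt_zero.trans_le k.zero_le, rfl⟩

lemma errLCZone_le_linComp_add (S : Fin N → ZMod 2) {T : Fin N → ZMod 2} {k Z : ℕ}
    (hT : wt T ≤ k) (hZ : ∀ i : Fin N, T i ≠ 0 → (i : ℕ) < Z) :
    errLCZone S k Z ≤ linComp (S + T) :=
  Nat.sInf_le ⟨T, hT, fun i hi => by_contra fun h => (hZ i h).not_ge hi, rfl⟩

lemma errLC_le_errLCZone (S : Fin N → ZMod 2) (k Z : ℕ) : errLC S k ≤ errLCZone S k Z := by
  obtain ⟨T, hT, -, hLT⟩ : errLCZone S k Z ∈ {c | ∃ T : Fin N → ZMod 2, wt T ≤ k ∧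
      (∀ i : Fin N, Z ≤ (i : ℕ) → T i = 0) ∧ linComp (S + T) = c} :=
    Nat.sInf_mem ⟨_, 0, wt_zero.trans_le k.zero_le, fun _ _ => rfl, rfl⟩
  exact hLT ▸ errLC_le_linComp_add S hT

end ErrorLinearComplexity

theorem stmt15_general (v r k : ℕ) (S : Fin (2 ^ v * r) → ZMod 2)
    (hlt : ∀ q : ℕ, q.Prime → q ∣ r → 2 ^ v * r - errLC S k < orderOf (2 : ZMod q)) :
    (∃ m ≤ k, ∃ E : Fin (2 ^ v * r) → ZMod 2, wt E = m ∧
      (∀ i : Fin (2 ^ v * r), E i ≠ 0 →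
        (i : ℕ) < 2 ^ (Nat.clog 2 (2 ^ v * r - errLC S k))) ∧
      linComp (S + E) = errLC S k) ∧
    errLC S k = errLCZone S k (2 ^ (Nat.clog 2 (2 ^ v * r - errLC S k))) := by
  set Z := 2 ^ (Nat.clog 2 (2 ^ v * r - errLC S k))
  obtain ⟨T, hT, hLT⟩ := exists_linComp_add_eq_errLC S k
  have hdeg : (periodGcd (S + T)).natDegree = 2 ^ v * r - errLC S k :=
    hLT ▸ natDegree_periodGcd (S + T)
  have hdvd : periodGcd (S + T) ∣ Polynomial.X ^ Z - 1 :=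
    dvd_X_pow_char_pow_sub_one_of_natDegree_lt_orderOf (by simpa [hdeg] using hlt)
      (periodGcd_dvd_X_pow_sub_one _) (hdeg ▸ Nat.le_pow_clog one_lt_two _)
  have hwt : wt (foldMod Z T) ≤ k := (wt_foldMod_le Z T).trans hT
  have hzone : ∀ i, foldMod Z T i ≠ 0 → (i : ℕ) < Z := fun _ =>
    lt_of_foldMod_ne_zero (by positivity)
  have hL : linComp (S + foldMod Z T) = errLC S k :=
    ((linComp_add_foldMod_le hdvd).trans_eq hLT).antisymm (errLC_le_linComp_add S hwt)
  exact ⟨⟨_, hwt, _, rfl, hzone, hL⟩, (errLC_le_errLCZone S k Z).antisymm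
    ((errLCZone_le_linComp_add S hwt hzone).trans_eq hL)⟩

/-- Theorem on sequences of period `N = 2^v r` with `2` a primitive root mod the odd
prime `r`: an error vector reaching `L_{N,k}(S)` can be found with support in
`[0, Z)` for `Z = 2^{⌈log₂(N - L_{N,k}(S))⌉}`; in particular
`L_{N,k}(S) = L_{N,k;Z}(S)`. -/
theorem stmt15 (v r k c : ℕ) (hv : 0 < v) (hr : r.Prime) (hodd : Odd r)
    (hprim : orderOf (2 : ZMod r) = r - 1)
    (hk1 : 1 ≤ k) (hk : k ≤ 2^v * r)
    (S : Fin (2^v * r) → ZMod 2)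
    (hLS : linComp S = 2^v * r - c)
    (hgt : errLC S k < linComp S)
    (hge : 2^v * r - min (2^v) (r - 2) ≤ errLC S k) :
    (∃ m ≤ k, ∃ E : Fin (2^v * r) → ZMod 2, wt E = m ∧
      (∀ i : Fin (2^v * r), E i ≠ 0 → (i : ℕ) < 2^(Nat.clog 2 (2^v * r - errLC S k))) ∧
      linComp (S + E) = errLC S k) ∧
    errLC S k = errLCZone S k (2^(Nat.clog 2 (2^v * r - errLC S k))) := by
  have hr2 := hr.two_le
  refine stmt15_general v r k S fun q hq hqr => ?_
  rw [(Nat.prime_dvd_prime_iff_eq hq hr).1 hqr, hprim]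
  omega
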